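/- arXiv:2410.20209 — 2 statements merged into one kernel-verified Lean document; each statement's English description precedes it below -/
import Mathlib

section
/- Let d ≥ 3 and ℓ ≥ 1 be integers. For all x ∈ [−1,1], the d-dimensional Legendre polynomials satisfy P_{2ℓ}(x) − P_{2(ℓ+1)}(x) ≤ ((λ_{2(ℓ+1)} − λ_{2ℓ})/λ_2) · (1 − P_2(x)), where λ_k = k(k + d − 2). -/
open MeasureTheory

/-- The constant ω_p = 2π^((p+1)/2) / Γ((p+1)/2). -/
noncomputable def omegaConst (p : ℝ) : ℝ :=
  2 * Real.pi ^ ((p + 1) / 2) / Real.Gamma ((p + 1) / 2)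

/-- The d-dimensional Legendre polynomial of order n, normalized so that P_n(1) = 1,
given by the integral representation
P_n(x) = (ω_{d−3}/ω_{d−2}) ∫_{−1}^{1} Re((x + i s √(1−x²))^n) (1−s²)^((d−4)/2) ds. -/
noncomputable def legendreP (d : ℕ) (n : ℕ) (x : ℝ) : ℝ :=
  (omegaConst ((d : ℝ) - 3) / omegaConst ((d : ℝ) - 2)) *
    ∫ s in (-1 : ℝ)..1,
      (((x : ℂ) + Complex.I * (s : ℂ) * (Real.sqrt (1 - x ^ 2) : ℂ)) ^ n).re *
        (1 - s ^ 2) ^ (((d : ℝ) - 4) / 2)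

/-- The eigenvalue λ_k = k(k + d − 2) of the (minus) spherical Laplacian on S^{d−1}. -/
noncomputable def lambdaEig (d k : ℕ) : ℝ := (k : ℝ) * ((k : ℝ) + (d : ℝ) - 2)

/-!
Integrating by parts in the integral representation gives the contiguous relation
`P_n - P_{n+2} = (2n + d) / (d - 1) * (1 - x²) * Q_n`, where `P` and `Q` are the Legendre
polynomials in dimensions `d` and `d + 2`. The case `n = 0`, where `Q_0 = 1`, evaluates `1 - P_2`,
and `2n + d` is half of `λ_{n+2} - λ_n`, so the inequality amounts to `Q_n ≤ 1`. That bound holds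
because `Q_n` is an average of powers of points of the unit disc.
-/

theorem integral_rpow_mul_one_sub_rpow {a b : ℝ} (ha : -1 < a) (hb : -1 < b) :
    ∫ t in (0 : ℝ)..1, t ^ a * (1 - t) ^ b = ProbabilityTheory.beta (a + 1) (b + 1) := by
  have complex_eq : Complex.betaIntegral ((a + 1 : ℝ) : ℂ) ((b + 1 : ℝ) : ℂ) =
      ((∫ t in (0 : ℝ)..1, t ^ a * (1 - t) ^ b : ℝ) : ℂ) := by
    rw [Complex.betaIntegral, ← intervalIntegral.integral_ofReal]
    refine intervalIntegral.integral_congr fun t ht => ?_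
    rw [Set.uIcc_of_le zero_le_one] at ht
    simp [Complex.ofReal_cpow ht.1, Complex.ofReal_cpow (sub_nonneg.2 ht.2)]
  rw [ProbabilityTheory.beta_eq_betaIntegralReal _ _ (by linarith) (by linarith), complex_eq,
    Complex.ofReal_re]

theorem integral_one_sub_sq_rpow_eq_beta {a : ℝ} (ha : -1 < a) :
    ∫ s in (-1 : ℝ)..1, (1 - s ^ 2) ^ a =
      2 ^ (2 * a + 1) * ProbabilityTheory.beta (a + 1) (a + 1) := by
  have factor (t : ℝ) (ht : t ∈ Set.uIcc (0 : ℝ) 1) :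
      (1 - (2 * t - 1) ^ 2) ^ a = 2 ^ (2 * a) * (t ^ a * (1 - t) ^ a) := by
    rw [Set.uIcc_of_le zero_le_one] at ht
    have one_sub_nonneg : 0 ≤ 1 - t := sub_nonneg.2 ht.2
    rw [Real.rpow_mul zero_le_two, ← Real.mul_rpow ht.1 one_sub_nonneg,
      ← Real.mul_rpow (by positivity) (mul_nonneg ht.1 one_sub_nonneg), Real.rpow_two]
    congr 1
    ring
  have substitution : ∫ t in (0 : ℝ)..1, (1 - (2 * t - 1) ^ 2) ^ a =
      2⁻¹ * ∫ s in (-1 : ℝ)..1, (1 - s ^ 2) ^ a := by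
    rw [intervalIntegral.integral_comp_mul_sub (fun s : ℝ => (1 - s ^ 2) ^ a) two_ne_zero]
    norm_num
  rw [intervalIntegral.integral_congr factor, intervalIntegral.integral_const_mul,
    integral_rpow_mul_one_sub_rpow ha ha] at substitution
  rw [Real.rpow_add_one two_ne_zero]
  linarith

theorem integral_one_sub_sq_rpow {a : ℝ} (ha : -1 < a) :
    ∫ s in (-1 : ℝ)..1, (1 - s ^ 2) ^ a =
      √Real.pi * Real.Gamma (a + 1) / Real.Gamma (a + 3 / 2) := by
  have gamma_half_pos : 0 < Real.Gamma (a + 3 / 2) := Real.Gamma_pos_of_pos (by linarith)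
  have gamma_double_pos : 0 < Real.Gamma (a + 1 + (a + 1)) := Real.Gamma_pos_of_pos (by linarith)
  have duplication : Real.Gamma (a + 1) * Real.Gamma (a + 3 / 2) =
      Real.Gamma (a + 1 + (a + 1)) * 2 ^ (-(2 * a + 1)) * √Real.pi := by
    convert Real.Gamma_mul_Gamma_add_half (a + 1) using 3 <;> ring_nf
  have two_rpow_cancel : (2 : ℝ) ^ (2 * a + 1) * 2 ^ (-(2 * a + 1)) = 1 := by
    rw [← Real.rpow_add two_pos, add_neg_cancel, Real.rpow_zero]
  rw [integral_one_sub_sq_rpow_eq_beta ha, ProbabilityTheory.beta, mul_div_assoc',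
    div_eq_div_iff gamma_double_pos.ne' gamma_half_pos.ne']
  linear_combination 2 ^ (2 * a + 1) * Real.Gamma (a + 1) * duplication +
    Real.Gamma (a + 1) * Real.Gamma (a + 1 + (a + 1)) * √Real.pi * two_rpow_cancel

theorem omegaConst_pos {p : ℝ} (hp : -1 < p) : 0 < omegaConst p :=
  div_pos (mul_pos two_pos (Real.rpow_pos_of_pos Real.pi_pos _))
    (Real.Gamma_pos_of_pos (by linarith))

theorem omegaConst_add_two {p : ℝ} (hp : p ≠ -1) :
    omegaConst (p + 2) = 2 * Real.pi / (p + 1) * omegaConst p := by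
  have half_ne_zero : (p + 1) / 2 ≠ 0 := div_ne_zero (by grind) two_ne_zero
  rw [omegaConst, omegaConst, show (p + 2 + 1) / 2 = (p + 1) / 2 + 1 by ring,
    Real.Gamma_add_one half_ne_zero, Real.rpow_add_one Real.pi_ne_zero, div_mul_div_comm,
    div_mul_eq_mul_div, div_div_eq_mul_div]
  ring

theorem omegaConst_sub_one_div_omegaConst {q : ℝ} (hq : 2 < q) :
    omegaConst (q - 1) / omegaConst q =
      (q - 1) / (q - 2) * (omegaConst (q - 3) / omegaConst (q - 2)) := by
  have q_sub_one_ne_zero : q - 1 ≠ 0 := by linarith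
  have omegaConst_sub_one : omegaConst (q - 1) = 2 * Real.pi / (q - 2) * omegaConst (q - 3) := by
    convert omegaConst_add_two (by linarith : q - 3 ≠ -1) using 3 <;> ring
  have omegaConst_self : omegaConst q = 2 * Real.pi / (q - 1) * omegaConst (q - 2) := by
    convert omegaConst_add_two (by linarith : q - 2 ≠ -1) using 3 <;> ring
  rw [omegaConst_sub_one, omegaConst_self]
  field_simp

theorem integral_one_sub_sq_rpow_eq_omegaConst_div {a : ℝ} (ha : -1 < a) :
    ∫ s in (-1 : ℝ)..1, (1 - s ^ 2) ^ a = omegaConst (2 * a + 2) / omegaConst (2 * a + 1) := by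
  have pi_rpow_ne_zero : Real.pi ^ (a + 1) ≠ 0 := (Real.rpow_pos_of_pos Real.pi_pos _).ne'
  rw [integral_one_sub_sq_rpow ha, omegaConst, omegaConst,
    show (2 * a + 2 + 1) / 2 = a + 1 + 1 / 2 by ring, show (2 * a + 1 + 1) / 2 = a + 1 by ring,
    show a + 3 / 2 = a + 1 + 1 / 2 by ring, Real.rpow_add Real.pi_pos, ← Real.sqrt_eq_rpow]
  field_simp

theorem intervalIntegrable_one_sub_sq_rpow {a : ℝ} (ha : -1 < a) :
    IntervalIntegrable (fun s : ℝ => (1 - s ^ 2) ^ a) volume (-1) 1 := by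
  apply intervalIntegral.intervalIntegrable_of_integral_ne_zero
  rw [integral_one_sub_sq_rpow_eq_omegaConst_div ha]
  exact (div_pos (omegaConst_pos (by linarith)) (omegaConst_pos (by linarith))).ne'

theorem one_sub_sq_nonneg {y : ℝ} (hy : y ∈ Set.Icc (-1 : ℝ) 1) : 0 ≤ 1 - y ^ 2 :=
  sub_nonneg.2 ((sq_le_one_iff_abs_le_one y).2 (abs_le.2 hy))

/-- The point `x + i s √(1 - x²)` whose powers are averaged in Laplace's integral representation
of the Legendre polynomials. -/
noncomputable def laplaceBase (x s : ℝ) : ℂ := x + Complex.I * s * √(1 - x ^ 2)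

@[fun_prop]
theorem continuous_laplaceBase (x : ℝ) : Continuous (laplaceBase x) := by
  unfold laplaceBase
  fun_prop

theorem hasDerivAt_laplaceBase (x s : ℝ) :
    HasDerivAt (laplaceBase x) (Complex.I * √(1 - x ^ 2)) s := by
  have linear_part : HasDerivAt (fun s : ℝ => Complex.I * (s : ℂ)) Complex.I s := by
    simpa using (hasDerivAt_id s).ofReal_comp.const_mul Complex.I
  exact (linear_part.mul_const _).const_add _

theorem hasDerivAt_im_laplaceBase_pow_succ (x s : ℝ) (n : ℕ) :
    HasDerivAt (fun s => (laplaceBase x s ^ (n + 1)).im)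
      ((n + 1) * √(1 - x ^ 2) * (laplaceBase x s ^ n).re) s := by
  convert! Complex.imCLM.hasFDerivAt.comp_hasDerivAt s
    ((hasDerivAt_laplaceBase x s).pow (n + 1)) using 1
  simp only [Nat.cast_add, Nat.cast_one, add_tsub_cancel_right, Complex.imCLM_apply, Complex.mul_im,
    Complex.mul_re, Complex.add_re, Complex.natCast_re, Complex.one_re, Complex.add_im,
    Complex.natCast_im, Complex.one_im, add_zero, zero_mul, sub_zero, Complex.I_re,
    Complex.ofReal_im, mul_zero, Complex.I_im, Complex.ofReal_re, one_mul, zero_add, sub_self]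
  ring

theorem norm_laplaceBase_le_one {x s : ℝ} (hx : x ∈ Set.Icc (-1 : ℝ) 1)
    (hs : s ∈ Set.Icc (-1 : ℝ) 1) : ‖laplaceBase x s‖ ≤ 1 := by
  have hx_sq : 0 ≤ 1 - x ^ 2 := one_sub_sq_nonneg hx
  have hs_sq : 0 ≤ 1 - s ^ 2 := one_sub_sq_nonneg hs
  have norm_sq_eq : ‖laplaceBase x s‖ ^ 2 = 1 - (1 - x ^ 2) * (1 - s ^ 2) := by
    rw [Complex.sq_norm, Complex.normSq_apply]
    simp only [laplaceBase, Complex.add_re, Complex.add_im, Complex.mul_re, Complex.mul_im,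
      Complex.ofReal_re, Complex.ofReal_im, Complex.I_re, Complex.I_im, zero_mul, mul_zero, one_mul,
      sub_self, zero_add, add_zero]
    linear_combination s ^ 2 * Real.sq_sqrt hx_sq
  rw [← sq_le_one_iff₀ (norm_nonneg _), norm_sq_eq]
  exact sub_le_self _ (mul_nonneg hx_sq hs_sq)

theorem re_laplaceBase_pow_le_one {x s : ℝ} (hx : x ∈ Set.Icc (-1 : ℝ) 1)
    (hs : s ∈ Set.Icc (-1 : ℝ) 1) (n : ℕ) : (laplaceBase x s ^ n).re ≤ 1 :=
  calc (laplaceBase x s ^ n).re ≤ ‖laplaceBase x s‖ ^ n :=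
        (Complex.re_le_norm _).trans_eq (norm_pow _ n)
    _ ≤ 1 := pow_le_one₀ (norm_nonneg _) (norm_laplaceBase_le_one hx hs)

theorem re_laplaceBase_pow_sub_pow_add_two {x : ℝ} (hx : x ∈ Set.Icc (-1 : ℝ) 1) (s : ℝ) (n : ℕ) :
    (laplaceBase x s ^ n).re - (laplaceBase x s ^ (n + 2)).re =
      (1 - x ^ 2) * (1 - s ^ 2) * (laplaceBase x s ^ n).re +
        2 * s * √(1 - x ^ 2) * (laplaceBase x s ^ (n + 1)).im := by
  have sqrt_sq : √(1 - x ^ 2) ^ 2 = 1 - x ^ 2 := Real.sq_sqrt (one_sub_sq_nonneg hx)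
  rw [pow_succ _ (n + 1), pow_succ _ n]
  generalize laplaceBase x s ^ n = w
  simp only [laplaceBase, Complex.add_re, Complex.add_im, Complex.mul_re, Complex.mul_im,
    Complex.ofReal_re, Complex.ofReal_im, Complex.I_re, Complex.I_im, zero_mul, mul_zero, one_mul,
    sub_self, zero_add, add_zero]
  linear_combination (-s ^ 2 * w.re) * sqrt_sq

/-- Laplace's integral of order `n` with weight exponent `a`, a multiple of the Gegenbauer
polynomial of parameter `a + 1`; the Legendre polynomial in dimension `d` is its normalization for
`a = (d - 4) / 2`. -/
noncomputable def laplaceIntegral (a : ℝ) (n : ℕ) (x : ℝ) : ℝ :=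
  ∫ s in (-1 : ℝ)..1, (laplaceBase x s ^ n).re * (1 - s ^ 2) ^ a

theorem intervalIntegrable_laplaceIntegral {a : ℝ} (ha : -1 < a) (n : ℕ) (x : ℝ) :
    IntervalIntegrable (fun s => (laplaceBase x s ^ n).re * (1 - s ^ 2) ^ a) volume (-1) 1 :=
  (intervalIntegrable_one_sub_sq_rpow ha).continuousOn_mul (by fun_prop)

theorem laplaceIntegral_zero (a x : ℝ) :
    laplaceIntegral a 0 x = ∫ s in (-1 : ℝ)..1, (1 - s ^ 2) ^ a := by
  simp [laplaceIntegral]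

theorem laplaceIntegral_le_laplaceIntegral_zero {a : ℝ} (ha : -1 < a) (n : ℕ) {x : ℝ}
    (hx : x ∈ Set.Icc (-1 : ℝ) 1) : laplaceIntegral a n x ≤ laplaceIntegral a 0 x := by
  refine intervalIntegral.integral_mono_on (by norm_num)
    (intervalIntegrable_laplaceIntegral ha n x) (intervalIntegrable_laplaceIntegral ha 0 x)
    fun s hs => ?_
  have weight_nonneg : 0 ≤ (1 - s ^ 2) ^ a := Real.rpow_nonneg (one_sub_sq_nonneg hs) a
  rw [pow_zero, Complex.one_re]
  exact mul_le_mul_of_nonneg_right (re_laplaceBase_pow_le_one hx hs n) weight_nonneg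

theorem hasDerivAt_im_laplaceBase_pow_succ_mul_rpow (a : ℝ) (n : ℕ) {x s : ℝ}
    (hx : x ∈ Set.Icc (-1 : ℝ) 1) (hs : s ∈ Set.Ioo (-1 : ℝ) 1) :
    HasDerivAt
      (fun s => √(1 - x ^ 2) * (laplaceBase x s ^ (n + 1)).im * (1 - s ^ 2) ^ (a + 1))
      ((n + a + 2) * (1 - x ^ 2) * ((laplaceBase x s ^ n).re * (1 - s ^ 2) ^ (a + 1)) -
        (a + 1) * ((laplaceBase x s ^ n).re * (1 - s ^ 2) ^ a -
          (laplaceBase x s ^ (n + 2)).re * (1 - s ^ 2) ^ a)) s := by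
  have sqrt_sq : √(1 - x ^ 2) ^ 2 = 1 - x ^ 2 := Real.sq_sqrt (one_sub_sq_nonneg hx)
  have one_sub_sq_pos : 0 < 1 - s ^ 2 := by nlinarith [hs.1, hs.2]
  have weight_deriv : HasDerivAt (fun s : ℝ => (1 - s ^ 2) ^ (a + 1))
      (-(2 * s) * (a + 1) * (1 - s ^ 2) ^ a) s := by
    simpa using ((hasDerivAt_pow 2 s).const_sub 1).rpow_const (p := a + 1)
      (Or.inl one_sub_sq_pos.ne')
  convert! ((hasDerivAt_im_laplaceBase_pow_succ x s n).const_mul (√(1 - x ^ 2))).mul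
    weight_deriv using 1
  rw [Real.rpow_add_one one_sub_sq_pos.ne']
  linear_combination (-(a + 1) * (1 - s ^ 2) ^ a) * re_laplaceBase_pow_sub_pow_add_two hx s n -
    (n + 1) * (laplaceBase x s ^ n).re * (1 - s ^ 2) ^ a * (1 - s ^ 2) * sqrt_sq

theorem laplaceIntegral_sub_laplaceIntegral_add_two {a : ℝ} (ha : -1 < a) (n : ℕ) {x : ℝ}
    (hx : x ∈ Set.Icc (-1 : ℝ) 1) :
    (a + 1) * (laplaceIntegral a n x - laplaceIntegral a (n + 2) x) =
      (n + a + 2) * (1 - x ^ 2) * laplaceIntegral (a + 1) n x := by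
  have shifted_integrable :=
    (intervalIntegrable_laplaceIntegral (by linarith : -1 < a + 1) n x).const_mul
      ((n + a + 2) * (1 - x ^ 2))
  have integrable := intervalIntegrable_laplaceIntegral ha n x
  have add_two_integrable := intervalIntegrable_laplaceIntegral ha (n + 2) x
  have diff_integrable := (integrable.sub add_two_integrable).const_mul (a + 1)
  have primitive_continuous : Continuous fun s : ℝ =>
      √(1 - x ^ 2) * (laplaceBase x s ^ (n + 1)).im * (1 - s ^ 2) ^ (a + 1) :=
    (by fun_prop : Continuous fun s => √(1 - x ^ 2) * (laplaceBase x s ^ (n + 1)).im).mul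
      ((by fun_prop : Continuous fun s : ℝ => 1 - s ^ 2).rpow_const fun _ =>
        Or.inr (by linarith))
  have boundary_weight : (0 : ℝ) ^ (a + 1) = 0 := Real.zero_rpow (by linarith)
  have integral_deriv := intervalIntegral.integral_eq_sub_of_hasDerivAt_of_le (by norm_num)
    primitive_continuous.continuousOn
    (fun _ hs => hasDerivAt_im_laplaceBase_pow_succ_mul_rpow a n hx hs)
    (shifted_integrable.sub diff_integrable)
  rw [intervalIntegral.integral_sub shifted_integrable diff_integrable,
    intervalIntegral.integral_const_mul, intervalIntegral.integral_const_mul,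
    intervalIntegral.integral_sub integrable add_two_integrable] at integral_deriv
  simp only [one_pow, even_two.neg_pow, boundary_weight, mul_zero, sub_self] at integral_deriv
  exact (sub_eq_zero.1 integral_deriv).symm

theorem legendreP_eq_mul_laplaceIntegral (d n : ℕ) (x : ℝ) :
    legendreP d n x = omegaConst ((d : ℝ) - 3) / omegaConst ((d : ℝ) - 2) *
      laplaceIntegral (((d : ℝ) - 4) / 2) n x :=
  rfl

theorem legendreP_zero {d : ℕ} (hd : 3 ≤ d) (x : ℝ) : legendreP d 0 x = 1 := by
  have hd_real : (3 : ℝ) ≤ d := by exact_mod_cast hd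
  rw [legendreP_eq_mul_laplaceIntegral, laplaceIntegral_zero,
    integral_one_sub_sq_rpow_eq_omegaConst_div (by linarith),
    show 2 * (((d : ℝ) - 4) / 2) + 2 = d - 2 by ring,
    show 2 * (((d : ℝ) - 4) / 2) + 1 = d - 3 by ring,
    div_mul_div_cancel₀ (omegaConst_pos (by linarith)).ne',
    div_self (omegaConst_pos (by linarith)).ne']

theorem legendreP_le_one {d : ℕ} (hd : 3 ≤ d) (n : ℕ) {x : ℝ} (hx : x ∈ Set.Icc (-1 : ℝ) 1) :
    legendreP d n x ≤ 1 := by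
  have hd_real : (3 : ℝ) ≤ d := by exact_mod_cast hd
  rw [← legendreP_zero hd x, legendreP_eq_mul_laplaceIntegral, legendreP_eq_mul_laplaceIntegral]
  exact mul_le_mul_of_nonneg_left (laplaceIntegral_le_laplaceIntegral_zero (by linarith) n hx)
    (div_pos (omegaConst_pos (by linarith)) (omegaConst_pos (by linarith))).le

theorem legendreP_sub_legendreP_add_two {d : ℕ} (hd : 3 ≤ d) (n : ℕ) {x : ℝ}
    (hx : x ∈ Set.Icc (-1 : ℝ) 1) :
    legendreP d n x - legendreP d (n + 2) x =
      (2 * n + d) / (d - 1) * (1 - x ^ 2) * legendreP (d + 2) n x := by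
  have hd_real : (3 : ℝ) ≤ d := by exact_mod_cast hd
  have d_sub_one_ne_zero : (d : ℝ) - 1 ≠ 0 := by linarith
  have d_sub_two_ne_zero : (d : ℝ) - 2 ≠ 0 := by linarith
  have contiguous : laplaceIntegral ((d - 4) / 2) n x - laplaceIntegral ((d - 4) / 2) (n + 2) x =
      (2 * n + d) * (1 - x ^ 2) * laplaceIntegral ((d - 4) / 2 + 1) n x / (d - 2) := by
    rw [eq_div_iff d_sub_two_ne_zero]
    linear_combination 2 * laplaceIntegral_sub_laplaceIntegral_add_two
      (by linarith : -1 < ((d : ℝ) - 4) / 2) n hx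
  have shifted_normalization : legendreP (d + 2) n x =
      (d - 1) / (d - 2) * (omegaConst (d - 3) / omegaConst (d - 2)) *
        laplaceIntegral ((d - 4) / 2 + 1) n x := by
    rw [legendreP_eq_mul_laplaceIntegral, ← omegaConst_sub_one_div_omegaConst (by linarith)]
    push_cast
    ring_nf
  rw [shifted_normalization, legendreP_eq_mul_laplaceIntegral, legendreP_eq_mul_laplaceIntegral,
    ← mul_sub, contiguous]
  field_simp

theorem one_sub_legendreP_two {d : ℕ} (hd : 3 ≤ d) {x : ℝ} (hx : x ∈ Set.Icc (-1 : ℝ) 1) :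
    1 - legendreP d 2 x = d / (d - 1) * (1 - x ^ 2) := by
  simpa [legendreP_zero hd, legendreP_zero (show 3 ≤ d + 2 by lia)] using
    legendreP_sub_legendreP_add_two hd 0 hx

theorem lambdaEig_two (d : ℕ) : lambdaEig d 2 = 2 * d := by
  simp [lambdaEig]

theorem lambdaEig_add_two_sub_lambdaEig (d n : ℕ) :
    lambdaEig d (n + 2) - lambdaEig d n = 2 * (2 * n + d) := by
  simp only [lambdaEig, Nat.cast_add, Nat.cast_ofNat]
  ring

theorem legendre_spectral_gap_inequality_general (d n : ℕ) (hd : 3 ≤ d) (x : ℝ)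
    (hx : x ∈ Set.Icc (-1 : ℝ) 1) :
    legendreP d n x - legendreP d (n + 2) x ≤
      ((lambdaEig d (n + 2) - lambdaEig d n) / lambdaEig d 2) * (1 - legendreP d 2 x) := by
  have hd_real : (3 : ℝ) ≤ d := by exact_mod_cast hd
  calc
    legendreP d n x - legendreP d (n + 2) x =
        (2 * n + d) / (d - 1) * (1 - x ^ 2) * legendreP (d + 2) n x :=
      legendreP_sub_legendreP_add_two hd n hx
    _ ≤ (2 * n + d) / (d - 1) * (1 - x ^ 2) :=
      mul_le_of_le_one_right
        (mul_nonneg (div_nonneg (by positivity) (by linarith)) (one_sub_sq_nonneg hx))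
        (legendreP_le_one (by lia) n hx)
    _ = ((lambdaEig d (n + 2) - lambdaEig d n) / lambdaEig d 2) * (1 - legendreP d 2 x) := by
      rw [lambdaEig_add_two_sub_lambdaEig, lambdaEig_two, one_sub_legendreP_two hd hx]
      field_simp

theorem legendre_spectral_gap_inequality
    (d ℓ : ℕ) (hd : 3 ≤ d) (hℓ : 1 ≤ ℓ) (x : ℝ) (hx : x ∈ Set.Icc (-1 : ℝ) 1) :
    legendreP d (2 * ℓ) x - legendreP d (2 * (ℓ + 1)) x ≤
      ((lambdaEig d (2 * (ℓ + 1)) - lambdaEig d (2 * ℓ)) / lambdaEig d 2) *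
        (1 - legendreP d 2 x) :=
  legendre_spectral_gap_inequality_general d (2 * ℓ) hd x hx
end

section
/- For every integer ℓ ≥ 1 and all x, s ∈ [−1, 1], one has (Im((x + i s √(1−x²))^{ℓ+1}))² − (Im((x + i s √(1−x²))^{ℓ}))² ≤ (2ℓ + 1) s² (1 − x²). -/
/-!
With `w = z ^ ℓ`, the identity
`(z * w).im ^ 2 - ‖z‖ ^ 2 * w.im ^ 2 = (z * w ^ 2).im * z.im` bounds the gap, for `z` in the closed
unit disc, by `(z ^ (2 * ℓ + 1)).im * z.im`. The homogeneous form of `|sin (n * θ)| ≤ n * |sin θ|`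
controls this product by `(2 * ℓ + 1) * z.im ^ 2`. The point `x + i s √(1 - x²)` lies in the disc.
-/

theorem abs_im_pow_succ_le (z : ℂ) (n : ℕ) :
    |(z ^ (n + 1)).im| ≤ (n + 1) * ‖z‖ ^ n * |z.im| := by
  induction n with
  | zero => simp
  | succ n ih =>
    calc |(z ^ (n + 1 + 1)).im|
        = |(z ^ (n + 1)).re * z.im + (z ^ (n + 1)).im * z.re| := by
          rw [pow_succ, Complex.mul_im]
      _ ≤ |(z ^ (n + 1)).re| * |z.im| + |(z ^ (n + 1)).im| * |z.re| := by
          simpa only [abs_mul] using abs_add_le ((z ^ (n + 1)).re * z.im) ((z ^ (n + 1)).im * z.re)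
      _ ≤ ‖z‖ ^ (n + 1) * |z.im| + (n + 1) * ‖z‖ ^ n * |z.im| * ‖z‖ := by
          gcongr
          · simpa only [norm_pow] using Complex.abs_re_le_norm (z ^ (n + 1))
          · exact Complex.abs_re_le_norm z
      _ = ((n + 1 : ℕ) + 1) * ‖z‖ ^ (n + 1) * |z.im| := by
          push_cast
          ring

theorem im_mul_sq_sub_norm_sq_mul_im_sq (z w : ℂ) :
    (z * w).im ^ 2 - ‖z‖ ^ 2 * w.im ^ 2 = (z * w ^ 2).im * z.im := by
  simp only [Complex.sq_norm, Complex.normSq_apply, sq w, Complex.mul_im, Complex.mul_re]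
  ring

theorem im_pow_succ_sq_sub_norm_sq_mul_le (z : ℂ) (n : ℕ) :
    (z ^ (n + 1)).im ^ 2 - ‖z‖ ^ 2 * (z ^ n).im ^ 2 ≤
      (2 * n + 1) * ‖z‖ ^ (2 * n) * z.im ^ 2 :=
  calc (z ^ (n + 1)).im ^ 2 - ‖z‖ ^ 2 * (z ^ n).im ^ 2
      = (z ^ (2 * n + 1)).im * z.im := by
        rw [pow_succ' z n, im_mul_sq_sub_norm_sq_mul_im_sq, ← pow_mul', ← pow_succ']
    _ ≤ |(z ^ (2 * n + 1)).im| * |z.im| := by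
        simpa only [abs_mul] using le_abs_self ((z ^ (2 * n + 1)).im * z.im)
    _ ≤ ((2 * n : ℕ) + 1) * ‖z‖ ^ (2 * n) * |z.im| * |z.im| := by
        gcongr
        exact abs_im_pow_succ_le z (2 * n)
    _ = (2 * n + 1) * ‖z‖ ^ (2 * n) * z.im ^ 2 := by
        rw [mul_assoc _ |z.im|, abs_mul_abs_self, ← sq]
        push_cast
        rfl

theorem im_pow_succ_sq_sub_im_pow_sq_le {z : ℂ} (hz : ‖z‖ ≤ 1) (n : ℕ) :
    (z ^ (n + 1)).im ^ 2 - (z ^ n).im ^ 2 ≤ (2 * n + 1) * z.im ^ 2 :=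
  calc (z ^ (n + 1)).im ^ 2 - (z ^ n).im ^ 2
      ≤ (z ^ (n + 1)).im ^ 2 - ‖z‖ ^ 2 * (z ^ n).im ^ 2 := by
        gcongr
        exact mul_le_of_le_one_left (sq_nonneg _) (pow_le_one₀ (norm_nonneg z) hz)
    _ ≤ (2 * n + 1) * ‖z‖ ^ (2 * n) * z.im ^ 2 := im_pow_succ_sq_sub_norm_sq_mul_le z n
    _ ≤ (2 * n + 1) * z.im ^ 2 := by
        gcongr
        exact mul_le_of_le_one_right (by positivity) (pow_le_one₀ (norm_nonneg z) hz)

theorem im_pow_sq_gap (ℓ : ℕ) (hℓ : 1 ≤ ℓ) (x s : ℝ)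
    (hx : x ∈ Set.Icc (-1 : ℝ) 1) (hs : s ∈ Set.Icc (-1 : ℝ) 1) :
    ((((x : ℂ) + Complex.I * (s : ℂ) * (Real.sqrt (1 - x ^ 2) : ℂ)) ^ (ℓ + 1)).im) ^ 2 -
      ((((x : ℂ) + Complex.I * (s : ℂ) * (Real.sqrt (1 - x ^ 2) : ℂ)) ^ ℓ).im) ^ 2 ≤
      (2 * (ℓ : ℝ) + 1) * s ^ 2 * (1 - x ^ 2) := by
  have hx_sq : 0 ≤ 1 - x ^ 2 := sub_nonneg.2 ((sq_le_one_iff_abs_le_one x).2 (abs_le.2 hx))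
  have hs_sq : s ^ 2 ≤ 1 := (sq_le_one_iff_abs_le_one s).2 (abs_le.2 hs)
  set z : ℂ := (x : ℂ) + Complex.I * (s : ℂ) * (Real.sqrt (1 - x ^ 2) : ℂ) with hz
  have re_z : z.re = x := by simp [hz]
  have im_z_sq : z.im ^ 2 = s ^ 2 * (1 - x ^ 2) := by
    simp [hz, mul_pow, Real.sq_sqrt hx_sq]
  have norm_z_le : ‖z‖ ≤ 1 := by
    rw [← sq_le_one_iff₀ (norm_nonneg z)]
    calc ‖z‖ ^ 2 = x ^ 2 + s ^ 2 * (1 - x ^ 2) := by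
          rw [Complex.sq_norm, Complex.normSq_apply, ← sq, ← sq, re_z, im_z_sq]
      _ ≤ x ^ 2 + 1 * (1 - x ^ 2) := by gcongr
      _ = 1 := by ring
  simpa only [im_z_sq, ← mul_assoc] using im_pow_succ_sq_sub_im_pow_sq_le norm_z_le ℓ
end
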